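/- Let (Φ₁,Φ₂) be a branching mechanism, V the unique solution of the cumulant equations (3.8), and H the moment matrix, and suppose that all eigenvalues of H have strictly negative real parts. Then for every λ ∈ [0,∞)² there exist strictly positive constants A(λ) and B(λ) such that V₁(t,λ) ≥ λ₁·e^{−A(λ)t} and V₂(t,λ) ≥ λ₂·e^{−B(λ)t} for all t ≥ 0. -/

import Mathlib

open MeasureTheory Filter Set

noncomputable section

/-- The state space `𝕄 = [0,∞) × ℕ`, as a subset of `ℝ²`. -/
def Mset : Set (ℝ × ℝ) := {z | 0 ≤ z.1 ∧ ∃ n : ℕ, z.2 = (n : ℝ)}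

/-- The space `𝕄₋₁ = [0,∞) × (ℕ ∪ {-1})`, as a subset of `ℝ²`. -/
def Mm1set : Set (ℝ × ℝ) := {z | 0 ≤ z.1 ∧ ∃ n : ℤ, (-1 : ℤ) ≤ n ∧ z.2 = (n : ℝ)}

/-- The data of a branching mechanism `(Φ₁, Φ₂)` of a mixed state branching process. -/
structure BranchingMechanism where
  a11 : ℝ
  a21 : ℝ
  alpha : ℝ
  a21_nonneg : 0 ≤ a21
  alpha_nonneg : 0 ≤ alpha
  n1 : Measure (ℝ × ℝ)
  n2 : Measure (ℝ × ℝ)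
  n1_sigmaFinite : SigmaFinite n1
  n2_sigmaFinite : SigmaFinite n2
  /-- `n₁` is supported on `𝕄` -/
  n1_supp : n1 Msetᶜ = 0
  /-- `n₂` is supported on `𝕄₋₁` -/
  n2_supp : n2 Mm1setᶜ = 0
  /-- `n₁` does not charge the origin -/
  n1_zero : n1 {0} = 0
  /-- `n₂` does not charge the origin -/
  n2_zero : n2 {0} = 0
  /-- `n₂([0,∞) × {-1}) < ∞` -/
  n2_neg1 : n2 {z : ℝ × ℝ | z.2 = -1} ≠ ⊤
  /-- `∫ (z₁ ∧ z₁² + z₂) n₁(dz) < ∞` -/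
  n1_moment : ∫⁻ z, ENNReal.ofReal (min z.1 (z.1 ^ 2) + z.2) ∂n1 ≠ ⊤
  /-- `∫ (z₁ + |z₂|) n₂(dz) < ∞` -/
  n2_moment : ∫⁻ z, ENNReal.ofReal (z.1 + |z.2|) ∂n2 ≠ ⊤

/-- `Φ₁(λ) = -a₁₁λ₁ - αλ₁² - ∫ (e^{-⟨λ,z⟩} - 1 + λ₁z₁) n₁(dz)`. -/
def mPhi1 (B : BranchingMechanism) (l : ℝ × ℝ) : ℝ :=
  -B.a11 * l.1 - B.alpha * l.1 ^ 2 -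
    ∫ z, (Real.exp (-(l.1 * z.1 + l.2 * z.2)) - 1 + l.1 * z.1) ∂B.n1

/-- `Φ₂(λ) = a₂₁λ₁ + ∫ (1 - e^{-⟨λ,z⟩}) n₂(dz)`. -/
def mPhi2 (B : BranchingMechanism) (l : ℝ × ℝ) : ℝ :=
  B.a21 * l.1 + ∫ z, (1 - Real.exp (-(l.1 * z.1 + l.2 * z.2))) ∂B.n2


/-- `V : t ↦ V(t,λ)` is a continuous `[0,∞)²`-valued solution of the cumulant
equations (3.8) with initial value `λ = l`. -/
def SolvesCumulant (B : BranchingMechanism) (l : ℝ × ℝ) (V : ℝ → ℝ × ℝ) : Prop :=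
  ContinuousOn V (Ici 0) ∧
  (∀ t : ℝ, 0 ≤ t → 0 ≤ (V t).1 ∧ 0 ≤ (V t).2) ∧
  (∀ t : ℝ, 0 ≤ t →
    (V t).1 = l.1 + ∫ s in (0:ℝ)..t, mPhi1 B (V s) ∧
    (V t).2 = l.2 + ∫ s in (0:ℝ)..t, mPhi2 B (V s))

/-- Entries of the moment matrix `H`. -/
def H11 (B : BranchingMechanism) : ℝ := -B.a11
def H12 (B : BranchingMechanism) : ℝ := ∫ z, z.2 ∂B.n1
def H21 (B : BranchingMechanism) : ℝ := B.a21 + ∫ z, z.1 ∂B.n2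
def H22 (B : BranchingMechanism) : ℝ := ∫ z, z.2 ∂B.n2

/-- The moment matrix `H` of a branching mechanism. -/
def Hmat (B : BranchingMechanism) : Matrix (Fin 2) (Fin 2) ℝ :=
  !![H11 B, H12 B; H21 B, H22 B]

/-! The components of the mechanism satisfy `Φᵢ(v) ≥ -c vᵢ` on `{v ∈ [0,∞)² | vᵢ ≤ K}`, with `c`
depending on `K` but not on the other coordinate. Take `K = λᵢ` and `A > c`: the barrier
`λᵢ e^{-At}` never exceeds `K`, so wherever `Vᵢ` meets it the derivative of `Vᵢ` is strictly larger
than that of the barrier, and `Vᵢ` cannot cross it downwards. -/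

lemma exp_neg_sub_one_add_le_min {x : ℝ} (hx : 0 ≤ x) :
    Real.exp (-x) - 1 + x ≤ min x (x ^ 2) := by
  have hexp : Real.exp (-x) ≤ 1 := Real.exp_le_one_iff.2 (neg_nonpos.2 hx)
  refine le_min (by linarith) ?_
  rcases le_total x 1 with hx1 | hx1
  · have hquad := Real.abs_exp_sub_one_sub_id_le (x := -x) (by rwa [abs_neg, abs_of_nonneg hx])
    rw [neg_sq] at hquad
    linarith [le_of_abs_le hquad]
  · nlinarith

lemma min_mul_sq_le {c a : ℝ} (hc : 0 ≤ c) (ha : 0 ≤ a) :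
    min (c * a) ((c * a) ^ 2) ≤ c * max 1 c * min a (a ^ 2) := by
  have hca : 0 ≤ c * a := mul_nonneg hc ha
  rw [mul_min_of_nonneg _ _ (by positivity)]
  refine min_le_min ?_ ?_
  · nlinarith [le_max_left 1 c]
  · nlinarith [mul_le_mul_of_nonneg_left (le_max_right 1 c) (mul_nonneg hca ha)]

lemma abs_one_sub_exp_neg_le {x c : ℝ} (hc : 0 ≤ c) (hx : -c ≤ x) :
    |1 - Real.exp (-x)| ≤ |x| * Real.exp c := by
  have hexp_c : 1 ≤ Real.exp c := Real.one_le_exp hc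
  rw [abs_le]
  constructor
  · have hmul : Real.exp (-x) * (1 + x) ≤ 1 := by
      calc Real.exp (-x) * (1 + x) ≤ Real.exp (-x) * Real.exp x := by
            gcongr; linarith [Real.add_one_le_exp x]
        _ = 1 := by rw [← Real.exp_add, neg_add_cancel, Real.exp_zero]
    have hdom : -x * Real.exp (-x) ≤ |x| * Real.exp c :=
      mul_le_mul (neg_le_abs x) (Real.exp_le_exp.2 (by linarith)) (Real.exp_nonneg _)
        (abs_nonneg x)
    linarith
  · calc 1 - Real.exp (-x) ≤ x := by linarith [Real.one_sub_le_exp_neg x]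
      _ ≤ |x| * Real.exp c := (le_abs_self x).trans (le_mul_of_one_le_right (abs_nonneg x) hexp_c)

lemma eventually_mem_Icc_zero_add_one (v : ℝ × ℝ) :
    ∀ᶠ u in nhdsWithin v (Ici 0), u ∈ Icc 0 (v + 1) := by
  have hle : Iic (v + 1) ∈ nhds v := by
    rw [Iic_prod_eq]
    exact prod_mem_nhds (Iic_mem_nhds (lt_add_one v.1)) (Iic_mem_nhds (lt_add_one v.2))
  filter_upwards [self_mem_nhdsWithin, mem_nhdsWithin_of_mem_nhds hle] with u h0 h1
    using ⟨h0, h1⟩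

lemma hasDerivWithinAt_Ici_of_eq_add_integral {E : Type*} [NormedAddCommGroup E]
    [NormedSpace ℝ E] [CompleteSpace E] {u φ : ℝ → E} {a : ℝ} {c : E}
    (hφ : ContinuousOn φ (Ici a)) (hu : ∀ t, a ≤ t → u t = c + ∫ s in a..t, φ s) {t : ℝ}
    (ht : a ≤ t) : HasDerivWithinAt u (φ t) (Ici t) t := by
  have hφt : ContinuousOn φ (Ioi t) := hφ.mono fun s hs => ht.trans (le_of_lt hs)
  have hint : IntervalIntegrable φ volume a t :=
    (hφ.mono (by rw [uIcc_of_le ht]; exact Icc_subset_Ici_self)).intervalIntegrable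
  have hderiv : HasDerivWithinAt (fun r => ∫ s in a..r, φ s) (φ t) (Ici t) t :=
    intervalIntegral.integral_hasDerivWithinAt_right (t := Ioi t) hint
      (hφt.stronglyMeasurableAtFilter_nhdsWithin measurableSet_Ioi t)
      ((hφ t ht).mono fun s hs => ht.trans (le_of_lt hs))
  exact (hderiv.const_add c).congr (fun s hs => hu s (ht.trans hs)) (hu t ht)

lemma mul_exp_neg_le_of_neg_mul_lt_deriv {u u' : ℝ → ℝ} {A : ℝ} (hA : 0 ≤ A)
    (hcont : ContinuousOn u (Ici 0)) (hnonneg : ∀ t, 0 ≤ t → 0 ≤ u t)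
    (hderiv : ∀ t, 0 ≤ t → HasDerivWithinAt u (u' t) (Ici t) t)
    (hlt : ∀ t, 0 ≤ t → 0 < u t → u t ≤ u 0 → -A * u t < u' t) {t : ℝ} (ht : 0 ≤ t) :
    u 0 * Real.exp (-A * t) ≤ u t := by
  rcases (hnonneg 0 le_rfl).eq_or_lt with h0 | h0
  · simpa only [← h0, zero_mul] using hnonneg t ht
  have hbarrier (s : ℝ) : HasDerivAt (fun s => u 0 * Real.exp (-A * s))
      (-A * (u 0 * Real.exp (-A * s))) s :=
    (((hasDerivAt_id' s).const_mul (-A)).exp.const_mul (u 0)).congr_deriv (by ring)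
  refine image_le_of_deriv_right_lt_deriv_boundary' (a := 0) (b := t)
    (fun s _ => (hbarrier s).continuousAt.continuousWithinAt)
    (fun s _ => (hbarrier s).hasDerivWithinAt) (by simp)
    (hcont.mono Icc_subset_Ici_self) (fun s hs => hderiv s hs.1) ?_ ⟨ht, le_rfl⟩
  intro s hs hcontact
  rw [hcontact]
  refine hlt s hs.1 (hcontact ▸ by positivity) (hcontact ▸ ?_)
  exact mul_le_of_le_one_right h0.le
    (Real.exp_le_one_iff.2 (mul_nonpos_of_nonpos_of_nonneg (neg_nonpos.2 hA) hs.1))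

namespace BranchingMechanism

variable (B : BranchingMechanism)

lemma ae_n1_nonneg : ∀ᵐ z ∂B.n1, 0 ≤ z.1 ∧ 0 ≤ z.2 := by
  have hsupp : ∀ᵐ z ∂B.n1, z ∈ Mset := B.n1_supp
  filter_upwards [hsupp] with z ⟨hz₁, n, hz₂⟩
  exact ⟨hz₁, hz₂ ▸ n.cast_nonneg⟩

lemma ae_n2_nonneg_and_neg_one_le : ∀ᵐ z ∂B.n2, 0 ≤ z.1 ∧ -1 ≤ z.2 := by
  have hsupp : ∀ᵐ z ∂B.n2, z ∈ Mm1set := B.n2_supp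
  filter_upwards [hsupp] with z ⟨hz₁, n, hn, hz₂⟩
  exact ⟨hz₁, hz₂ ▸ mod_cast hn⟩

lemma integrable_n1_min_add_snd :
    Integrable (fun z : ℝ × ℝ => min z.1 (z.1 ^ 2) + z.2) B.n1 := by
  refine (lintegral_ofReal_ne_top_iff_integrable
    (Measurable.aestronglyMeasurable (by fun_prop)) ?_).1 B.n1_moment
  filter_upwards [B.ae_n1_nonneg] with z hz
  exact add_nonneg (le_min hz.1 (sq_nonneg z.1)) hz.2

lemma integrable_n1_min : Integrable (fun z : ℝ × ℝ => min z.1 (z.1 ^ 2)) B.n1 := by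
  refine B.integrable_n1_min_add_snd.mono' (Measurable.aestronglyMeasurable (by fun_prop)) ?_
  filter_upwards [B.ae_n1_nonneg] with z hz
  rw [Real.norm_of_nonneg (le_min hz.1 (sq_nonneg z.1))]
  exact le_add_of_nonneg_right hz.2

lemma integrable_n1_snd : Integrable (fun z : ℝ × ℝ => z.2) B.n1 := by
  simpa only [Pi.sub_def, add_sub_cancel_left] using
    B.integrable_n1_min_add_snd.sub B.integrable_n1_min

lemma integrable_n2_fst_add_abs_snd :
    Integrable (fun z : ℝ × ℝ => z.1 + |z.2|) B.n2 := by
  refine (lintegral_ofReal_ne_top_iff_integrable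
    (Measurable.aestronglyMeasurable (by fun_prop)) ?_).1 B.n2_moment
  filter_upwards [B.ae_n2_nonneg_and_neg_one_le] with z hz
  exact add_nonneg hz.1 (abs_nonneg z.2)

lemma integrable_n2_abs_snd : Integrable (fun z : ℝ × ℝ => |z.2|) B.n2 := by
  refine B.integrable_n2_fst_add_abs_snd.mono' (Measurable.aestronglyMeasurable (by fun_prop)) ?_
  filter_upwards [B.ae_n2_nonneg_and_neg_one_le] with z hz
  rw [Real.norm_of_nonneg (abs_nonneg z.2)]
  exact le_add_of_nonneg_left hz.1

lemma integrable_n2_fst : Integrable (fun z : ℝ × ℝ => z.1) B.n2 := by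
  simpa only [Pi.sub_def, add_sub_cancel_right] using
    B.integrable_n2_fst_add_abs_snd.sub B.integrable_n2_abs_snd

end BranchingMechanism

section Integrands

variable {v w z : ℝ × ℝ}

lemma exp_neg_pairing_sub_one_add_le (hv : 0 ≤ v) (hz : 0 ≤ z.1 ∧ 0 ≤ z.2) :
    Real.exp (-(v.1 * z.1 + v.2 * z.2)) - 1 + v.1 * z.1
      ≤ v.1 * max 1 v.1 * min z.1 (z.1 ^ 2) := by
  have hfst : 0 ≤ v.1 * z.1 := mul_nonneg hv.1 hz.1
  have hsnd : 0 ≤ v.2 * z.2 := mul_nonneg hv.2 hz.2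
  calc Real.exp (-(v.1 * z.1 + v.2 * z.2)) - 1 + v.1 * z.1
      ≤ Real.exp (-(v.1 * z.1)) - 1 + v.1 * z.1 := by gcongr; linarith
    _ ≤ min (v.1 * z.1) ((v.1 * z.1) ^ 2) := exp_neg_sub_one_add_le_min hfst
    _ ≤ v.1 * max 1 v.1 * min z.1 (z.1 ^ 2) := min_mul_sq_le hv.1 hz.1

lemma norm_exp_neg_pairing_sub_one_add_le (hv : v ∈ Icc 0 w) (hz : 0 ≤ z.1 ∧ 0 ≤ z.2) :
    ‖Real.exp (-(v.1 * z.1 + v.2 * z.2)) - 1 + v.1 * z.1‖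
      ≤ w.1 * max 1 w.1 * min z.1 (z.1 ^ 2) + w.2 * z.2 := by
  obtain ⟨hv0 : 0 ≤ v, hvw₁ : v.1 ≤ w.1, hvw₂ : v.2 ≤ w.2⟩ := hv
  have hv₁ : 0 ≤ v.1 := hv0.1
  have hw₁ : 0 ≤ w.1 := hv₁.trans hvw₁
  have hmin : 0 ≤ min z.1 (z.1 ^ 2) := le_min hz.1 (sq_nonneg z.1)
  have hupper : Real.exp (-(v.1 * z.1 + v.2 * z.2)) - 1 + v.1 * z.1
      ≤ w.1 * max 1 w.1 * min z.1 (z.1 ^ 2) :=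
    (exp_neg_pairing_sub_one_add_le hv0 hz).trans (by gcongr)
  have hlower : -(v.2 * z.2) ≤ Real.exp (-(v.1 * z.1 + v.2 * z.2)) - 1 + v.1 * z.1 := by
    linarith [Real.one_sub_le_exp_neg (v.1 * z.1 + v.2 * z.2)]
  have hsnd : v.2 * z.2 ≤ w.2 * z.2 := mul_le_mul_of_nonneg_right hvw₂ hz.2
  have hsnd₀ : 0 ≤ v.2 * z.2 := mul_nonneg hv0.2 hz.2
  have hmin_w : 0 ≤ w.1 * max 1 w.1 * min z.1 (z.1 ^ 2) := by positivity
  rw [Real.norm_eq_abs, abs_le]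
  constructor <;> linarith

lemma neg_mul_abs_le_one_sub_exp_neg_pairing (hv : 0 ≤ v) (hz : 0 ≤ z.1 ∧ -1 ≤ z.2) :
    -(v.2 * Real.exp v.2) * |z.2| ≤ 1 - Real.exp (-(v.1 * z.1 + v.2 * z.2)) := by
  have hv₂ : 0 ≤ v.2 := hv.2
  have hfst : 0 ≤ v.1 * z.1 := mul_nonneg hv.1 hz.1
  have hsnd : -v.2 ≤ v.2 * z.2 := by nlinarith [hz.2]
  calc -(v.2 * Real.exp v.2) * |z.2| = -(|v.2 * z.2| * Real.exp v.2) := by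
        rw [abs_mul, abs_of_nonneg hv₂]; ring
    _ ≤ 1 - Real.exp (-(v.2 * z.2)) := neg_le_of_abs_le (abs_one_sub_exp_neg_le hv₂ hsnd)
    _ ≤ 1 - Real.exp (-(v.1 * z.1 + v.2 * z.2)) := by gcongr; linarith

lemma norm_one_sub_exp_neg_pairing_le (hv : v ∈ Icc 0 w) (hz : 0 ≤ z.1 ∧ -1 ≤ z.2) :
    ‖1 - Real.exp (-(v.1 * z.1 + v.2 * z.2))‖ ≤ (w.1 * z.1 + w.2 * |z.2|) * Real.exp w.2 := by
  obtain ⟨hv0 : 0 ≤ v, hvw₁ : v.1 ≤ w.1, hvw₂ : v.2 ≤ w.2⟩ := hv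
  have hv₂ : 0 ≤ v.2 := hv0.2
  have hfst : 0 ≤ v.1 * z.1 := mul_nonneg hv0.1 hz.1
  have hpairing : -w.2 ≤ v.1 * z.1 + v.2 * z.2 := by nlinarith [hz.2]
  calc ‖1 - Real.exp (-(v.1 * z.1 + v.2 * z.2))‖
      ≤ |v.1 * z.1 + v.2 * z.2| * Real.exp w.2 :=
        abs_one_sub_exp_neg_le (hv₂.trans hvw₂) hpairing
    _ ≤ (v.1 * z.1 + v.2 * |z.2|) * Real.exp w.2 := by
        gcongr
        exact (abs_add_le _ _).trans_eq (by rw [abs_of_nonneg hfst, abs_mul, abs_of_nonneg hv₂])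
    _ ≤ (w.1 * z.1 + w.2 * |z.2|) * Real.exp w.2 := by
        gcongr
        exact hz.1

end Integrands

section Mechanism

variable (B : BranchingMechanism)

lemma integrable_n1_dominating (w : ℝ × ℝ) : Integrable
    (fun z : ℝ × ℝ => w.1 * max 1 w.1 * min z.1 (z.1 ^ 2) + w.2 * z.2) B.n1 :=
  (B.integrable_n1_min.const_mul _).add (B.integrable_n1_snd.const_mul _)

lemma integrable_n2_dominating (w : ℝ × ℝ) : Integrable
    (fun z : ℝ × ℝ => (w.1 * z.1 + w.2 * |z.2|) * Real.exp w.2) B.n2 :=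
  ((B.integrable_n2_fst.const_mul _).add (B.integrable_n2_abs_snd.const_mul _)).mul_const _

lemma continuousOn_mPhi1 : ContinuousOn (mPhi1 B) (Ici 0) := by
  unfold mPhi1
  refine ContinuousOn.sub (by fun_prop) fun v _ => ?_
  refine continuousWithinAt_of_dominated
    (Eventually.of_forall fun u => Measurable.aestronglyMeasurable (by fun_prop)) ?_
    (integrable_n1_dominating B (v + 1))
    (Eventually.of_forall fun z => Continuous.continuousWithinAt (by fun_prop))
  filter_upwards [eventually_mem_Icc_zero_add_one v] with u hu
  filter_upwards [B.ae_n1_nonneg] with z hz using norm_exp_neg_pairing_sub_one_add_le hu hz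

lemma continuousOn_mPhi2 : ContinuousOn (mPhi2 B) (Ici 0) := by
  unfold mPhi2
  refine ContinuousOn.add (by fun_prop) fun v _ => ?_
  refine continuousWithinAt_of_dominated
    (Eventually.of_forall fun u => Measurable.aestronglyMeasurable (by fun_prop)) ?_
    (integrable_n2_dominating B (v + 1))
    (Eventually.of_forall fun z => Continuous.continuousWithinAt (by fun_prop))
  filter_upwards [eventually_mem_Icc_zero_add_one v] with u hu
  filter_upwards [B.ae_n2_nonneg_and_neg_one_le] with z hz
    using norm_one_sub_exp_neg_pairing_le hu hz

lemma integral_n1_exp_neg_sub_one_add_le {v : ℝ × ℝ} (hv : 0 ≤ v) :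
    ∫ z, (Real.exp (-(v.1 * z.1 + v.2 * z.2)) - 1 + v.1 * z.1) ∂B.n1
      ≤ v.1 * max 1 v.1 * ∫ z, min z.1 (z.1 ^ 2) ∂B.n1 := by
  rw [← integral_const_mul]
  refine integral_mono_ae ?_ (B.integrable_n1_min.const_mul _) ?_
  · refine (integrable_n1_dominating B v).mono'
      (Measurable.aestronglyMeasurable (by fun_prop)) ?_
    filter_upwards [B.ae_n1_nonneg] with z hz
      using norm_exp_neg_pairing_sub_one_add_le ⟨hv, le_rfl⟩ hz
  · filter_upwards [B.ae_n1_nonneg] with z hz using exp_neg_pairing_sub_one_add_le hv hz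

lemma le_integral_n2_one_sub_exp_neg {v : ℝ × ℝ} (hv : 0 ≤ v) :
    -(v.2 * Real.exp v.2) * ∫ z, |z.2| ∂B.n2
      ≤ ∫ z, (1 - Real.exp (-(v.1 * z.1 + v.2 * z.2))) ∂B.n2 := by
  rw [← integral_const_mul]
  refine integral_mono_ae (B.integrable_n2_abs_snd.const_mul _) ?_ ?_
  · refine (integrable_n2_dominating B v).mono'
      (Measurable.aestronglyMeasurable (by fun_prop)) ?_
    filter_upwards [B.ae_n2_nonneg_and_neg_one_le] with z hz
      using norm_one_sub_exp_neg_pairing_le ⟨hv, le_rfl⟩ hz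
  · filter_upwards [B.ae_n2_nonneg_and_neg_one_le] with z hz
      using neg_mul_abs_le_one_sub_exp_neg_pairing hv hz

lemma neg_mul_le_mPhi1 {v : ℝ × ℝ} {K : ℝ} (hv : 0 ≤ v) (hK : v.1 ≤ K) :
    -(|B.a11| + B.alpha * K + max 1 K * ∫ z, min z.1 (z.1 ^ 2) ∂B.n1) * v.1 ≤ mPhi1 B v := by
  have hv₁ : 0 ≤ v.1 := hv.1
  have hmoment : 0 ≤ ∫ z, min z.1 (z.1 ^ 2) ∂B.n1 := integral_nonneg_of_ae <| by
    filter_upwards [B.ae_n1_nonneg] with z hz using le_min hz.1 (sq_nonneg z.1)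
  have hdrift : B.a11 * v.1 ≤ |B.a11| * v.1 := by gcongr; exact le_abs_self _
  have hdiffusion : B.alpha * v.1 ^ 2 ≤ B.alpha * (K * v.1) := by
    have := B.alpha_nonneg
    rw [sq]
    gcongr
  have hjump : ∫ z, (Real.exp (-(v.1 * z.1 + v.2 * z.2)) - 1 + v.1 * z.1) ∂B.n1
      ≤ v.1 * max 1 K * ∫ z, min z.1 (z.1 ^ 2) ∂B.n1 :=
    (integral_n1_exp_neg_sub_one_add_le B hv).trans (by gcongr)
  unfold mPhi1
  linarith

lemma neg_mul_le_mPhi2 {v : ℝ × ℝ} {K : ℝ} (hv : 0 ≤ v) (hK : v.2 ≤ K) :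
    -(Real.exp K * ∫ z, |z.2| ∂B.n2) * v.2 ≤ mPhi2 B v := by
  have hv₂ : 0 ≤ v.2 := hv.2
  have hdrift : 0 ≤ B.a21 * v.1 := mul_nonneg B.a21_nonneg hv.1
  have hrate : v.2 * Real.exp v.2 * ∫ z, |z.2| ∂B.n2 ≤ v.2 * Real.exp K * ∫ z, |z.2| ∂B.n2 := by
    gcongr
  unfold mPhi2
  linarith [le_integral_n2_one_sub_exp_neg B hv]

lemma exists_pos_neg_mul_lt_mPhi1 (K : ℝ) :
    ∃ A : ℝ, 0 < A ∧ ∀ v : ℝ × ℝ, 0 ≤ v → 0 < v.1 → v.1 ≤ K → -A * v.1 < mPhi1 B v := by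
  set c := |B.a11| + B.alpha * K + max 1 K * ∫ z, min z.1 (z.1 ^ 2) ∂B.n1
  refine ⟨max c 0 + 1, by positivity, fun v hv hpos hK => ?_⟩
  calc -(max c 0 + 1) * v.1 < -c * v.1 := by gcongr; linarith [le_max_left c 0]
    _ ≤ mPhi1 B v := neg_mul_le_mPhi1 B hv hK

lemma exists_pos_neg_mul_lt_mPhi2 (K : ℝ) :
    ∃ A : ℝ, 0 < A ∧ ∀ v : ℝ × ℝ, 0 ≤ v → 0 < v.2 → v.2 ≤ K → -A * v.2 < mPhi2 B v := by
  set c := Real.exp K * ∫ z, |z.2| ∂B.n2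
  refine ⟨max c 0 + 1, by positivity, fun v hv hpos hK => ?_⟩
  calc -(max c 0 + 1) * v.2 < -c * v.2 := by gcongr; linarith [le_max_left c 0]
    _ ≤ mPhi2 B v := neg_mul_le_mPhi2 B hv hK

end Mechanism

namespace SolvesCumulant

variable {B : BranchingMechanism} {l : ℝ × ℝ} {V : ℝ → ℝ × ℝ}

lemma mapsTo (hV : SolvesCumulant B l V) : MapsTo V (Ici 0) (Ici 0) := hV.2.1

lemma apply_zero (hV : SolvesCumulant B l V) : V 0 = l := by
  have h := hV.2.2 0 le_rfl
  simpa only [intervalIntegral.integral_same, add_zero, ← Prod.ext_iff] using h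

lemma hasDerivWithinAt_fst (hV : SolvesCumulant B l V) {t : ℝ} (ht : 0 ≤ t) :
    HasDerivWithinAt (fun s => (V s).1) (mPhi1 B (V t)) (Ici t) t :=
  hasDerivWithinAt_Ici_of_eq_add_integral ((continuousOn_mPhi1 B).comp hV.1 hV.mapsTo)
    (fun s hs => (hV.2.2 s hs).1) ht

lemma hasDerivWithinAt_snd (hV : SolvesCumulant B l V) {t : ℝ} (ht : 0 ≤ t) :
    HasDerivWithinAt (fun s => (V s).2) (mPhi2 B (V t)) (Ici t) t :=
  hasDerivWithinAt_Ici_of_eq_add_integral ((continuousOn_mPhi2 B).comp hV.1 hV.mapsTo)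
    (fun s hs => (hV.2.2 s hs).2) ht

end SolvesCumulant

theorem cumulant_exponential_lower_bound_general {B : BranchingMechanism} {l : ℝ × ℝ}
    {V : ℝ → ℝ × ℝ} (hV : SolvesCumulant B l V) :
    ∃ A : ℝ, 0 < A ∧ ∃ B' : ℝ, 0 < B' ∧
      ∀ t : ℝ, 0 ≤ t →
        l.1 * Real.exp (-A * t) ≤ (V t).1 ∧ l.2 * Real.exp (-B' * t) ≤ (V t).2 := by
  obtain rfl : V 0 = l := hV.apply_zero
  obtain ⟨A, hA, hΦ₁⟩ := exists_pos_neg_mul_lt_mPhi1 B (V 0).1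
  obtain ⟨B', hB', hΦ₂⟩ := exists_pos_neg_mul_lt_mPhi2 B (V 0).2
  refine ⟨A, hA, B', hB', fun t ht => ⟨?_, ?_⟩⟩
  · exact mul_exp_neg_le_of_neg_mul_lt_deriv hA.le hV.1.fst (fun s hs => (hV.mapsTo hs).1)
      (fun s hs => hV.hasDerivWithinAt_fst hs) (fun s hs => hΦ₁ (V s) (hV.mapsTo hs)) ht
  · exact mul_exp_neg_le_of_neg_mul_lt_deriv hB'.le hV.1.snd (fun s hs => (hV.mapsTo hs).2)
      (fun s hs => hV.hasDerivWithinAt_snd hs) (fun s hs => hΦ₂ (V s) (hV.mapsTo hs)) ht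

/-- If all eigenvalues of `H` have strictly negative real parts, then
for every `λ ∈ [0,∞)²` there are `A(λ), B(λ) > 0` with
`V₁(t,λ) ≥ λ₁ e^{-A(λ)t}` and `V₂(t,λ) ≥ λ₂ e^{-B(λ)t}` for all `t ≥ 0`. -/
theorem cumulant_exponential_lower_bound (B : BranchingMechanism)
    (V : ℝ → (ℝ × ℝ) → ℝ × ℝ)
    (hV : ∀ l : ℝ × ℝ, 0 ≤ l.1 → 0 ≤ l.2 → SolvesCumulant B l (fun t => V t l))
    (hspec : ∀ μ : ℂ, μ ∈ spectrum ℂ ((Hmat B).map (Complex.ofReal ·)) → μ.re < 0) :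
    ∀ l : ℝ × ℝ, 0 ≤ l.1 → 0 ≤ l.2 →
      ∃ A : ℝ, 0 < A ∧ ∃ B' : ℝ, 0 < B' ∧
        ∀ t : ℝ, 0 ≤ t →
          l.1 * Real.exp (-A * t) ≤ (V t l).1 ∧
          l.2 * Real.exp (-B' * t) ≤ (V t l).2 :=
  fun l hl₁ hl₂ => cumulant_exponential_lower_bound_general (hV l hl₁ hl₂)
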